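/- For every set Γ of infinite binary sequences, the algorithmic dimension of Γ equals the infimum of the set of all s ∈ [0,∞) for which there exists a learning function l that algorithmically s-learns every X ∈ Γ; that is, adim(Γ) = inf{s ∈ [0,∞) : some learning function algorithmically s-learns every X ∈ Γ}. -/

import Mathlib

/-!
Both inequalities come from translating between gales and learning functions with an arbitrarily
small loss in the exponent.

From gales to learners (`learner_of_gale`). Let `d` be a lower semicomputable `s`-gale and `s < s'`.
For a rational `c` strictly between `2 ^ (1 - s')` and `2 ^ (1 - s)`, a multiple of `c ^ |w| * d w`
is a nonnegative supermartingale `M` with `M [] ≤ 1`. The learner says yes at `w` when the running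
maximum of `M` passes a new power of two. Capital at most doubles in one step, so the number of yes
answers along `w` counts the powers of two passed so far (`sum_learner`); the measure condition is
then Ville's inequality (`ville`), and a large value of `d` at a prefix `X↾n` forces
`M (X↾n) > 2 * 2 ^ ((1 - s') n)`, hence a path average at least `1 - s'`. The count can be
approximated from below because it only tests strict lower bounds on `M` (`lsc_levels`).

From learners to gales (`gale_of_learner`). Let `l` algorithmically `s`-learn `Γ`, let `s < s'`, and
let `r` be a rational with `1 - s' < r < 1 - s`. The set `A` of strings with path average above `r`
is computably enumerable, contains infinitely many prefixes of each `X ∈ Γ`, and by the measure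
condition has at most `2 ^ ((1 - r) n)` elements of length `n` (`card_le_of_measureCondition`).
For a rational `b` with `2 ^ (1 - r) < b < 2 ^ s'`, let `kern b v` be the gale with growth factor
`b` that reaches capital `1` at `v`. The series `∑ v ∈ A, |v| * kern b v` converges
(`summable_galeTerm`), is a lower semicomputable `logb 2 b`-gale (`lsc_galeSum`), and is at least
`|v|` at every `v ∈ A`, so it succeeds on `Γ`.

Computability of rational-valued functions refers to the coding of `ℚ` as a denumerable type, that
is, by ranks among codes of reduced fractions. The first part of the file shows that numerators,
denominators, fractions and finite sums of fractions are computable for this coding.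
-/

open Filter MeasureTheory

/-- `pref X n` is the string consisting of the first `n` bits of the sequence `X`. -/
def pref (X : ℕ → Bool) (n : ℕ) : List Bool := (List.range n).map X

/-- The cylinder at a finite binary string `w`: all sequences extending `w`. -/
def cylinder (w : List Bool) : Set (ℕ → Bool) := {X | pref X w.length = w}

/-- `l` satisfies the measure condition (w.r.t. the measure `μ`):
for every `n`, the set of sequences along which `l` says yes (`true`)
at least `n` times has measure at most `2⁻ⁿ`. -/
def MeasureCondition (μ : Measure (ℕ → Bool)) (l : List Bool → Bool) : Prop :=
  ∀ n : ℕ, μ {Y | (n : ℕ∞) ≤ {m : ℕ | l (pref Y m) = true}.encard} ≤ (2 ^ n)⁻¹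

/-- The path average of a learning function `l` up to the string `w`. -/
noncomputable def pathAvg (l : List Bool → Bool) (w : List Bool) : ℝ :=
  (∑ i ∈ Finset.range (w.length + 1), if l (w.take i) then (1 : ℝ) else 0) / w.length

/-- `l` `s`-learns `X` (w.r.t. `μ`). -/
def SLearns (μ : Measure (ℕ → Bool)) (l : List Bool → Bool) (s : ℝ) (X : ℕ → Bool) : Prop :=
  MeasureCondition μ l ∧
    1 - s ≤ Filter.limsup (fun n => pathAvg l (pref X n)) Filter.atTop

/-- A real-valued function on strings is lower semicomputable if it is monotonically
approximated from below by a computable rational-valued function. -/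
def LowerSemicomputable (f : List Bool → ℝ) : Prop :=
  ∃ g : List Bool × ℕ → ℚ, Computable g ∧
    (∀ w t, 0 ≤ g (w, t) ∧ g (w, t) ≤ g (w, t + 1) ∧ (g (w, t) : ℝ) ≤ f w) ∧
    ∀ w, Filter.Tendsto (fun t => (g (w, t) : ℝ)) Filter.atTop (nhds (f w))

/-- An `s`-gale (for the uniform measure): a nonnegative function with
`2^s d(w) = d(w0) + d(w1)`. -/
def IsGale (s : ℝ) (d : List Bool → ℝ) : Prop :=
  (∀ w, 0 ≤ d w) ∧ ∀ w, (2 : ℝ) ^ s * d w = d (w ++ [false]) + d (w ++ [true])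

/-- `d` succeeds on `X`: `limsup_n d(X↾n) = ∞`. -/
def SucceedsOn (d : List Bool → ℝ) (X : ℕ → Bool) : Prop :=
  ∀ M : ℝ, ∃ᶠ n in Filter.atTop, M < d (pref X n)

/-- The algorithmic dimension of `Γ`. -/
noncomputable def adim (Γ : Set (ℕ → Bool)) : ℝ :=
  sInf {s : ℝ | 0 ≤ s ∧
    ∃ d, IsGale s d ∧ LowerSemicomputable d ∧ ∀ X ∈ Γ, SucceedsOn d X}

open Encodable

/-! ### Computable operations on natural numbers -/

section Toolkit
variable {α : Type*} [Primcodable α]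

theorem comp_add {f g : α → ℕ} (hf : Computable f) (hg : Computable g) :
    Computable fun a => f a + g a := Primrec.nat_add.to_comp.comp hf hg

theorem comp_mul {f g : α → ℕ} (hf : Computable f) (hg : Computable g) :
    Computable fun a => f a * g a := Primrec.nat_mul.to_comp.comp hf hg

theorem comp_sub {f g : α → ℕ} (hf : Computable f) (hg : Computable g) :
    Computable fun a => f a - g a := Primrec.nat_sub.to_comp.comp hf hg

theorem comp_div {f g : α → ℕ} (hf : Computable f) (hg : Computable g) :
    Computable fun a => f a / g a := Primrec.nat_div.to_comp.comp hf hg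

theorem comp_mod {f g : α → ℕ} (hf : Computable f) (hg : Computable g) :
    Computable fun a => f a % g a := Primrec.nat_mod.to_comp.comp hf hg

theorem comp_pow {f g : α → ℕ} (hf : Computable f) (hg : Computable g) :
    Computable fun a => f a ^ g a :=
  (Primrec₂.unpaired'.1 Nat.Primrec.pow).to_comp.comp hf hg

theorem comp_lt {f g : α → ℕ} (hf : Computable f) (hg : Computable g) :
    Computable fun a => decide (f a < g a) :=
  (Primrec.nat_lt.decide).to_comp.comp hf hg

theorem comp_eq {β : Type*} [Primcodable β] [DecidableEq β] {f g : α → β}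
    (hf : Computable f) (hg : Computable g) :
    Computable fun a => decide (f a = g a) :=
  (Primrec.eq.decide).to_comp.comp hf hg

theorem comp_and {f g : α → Bool} (hf : Computable f) (hg : Computable g) :
    Computable fun a => f a && g a := Primrec.and.to_comp.comp hf hg

theorem comp_ite {σ : Type*} [Primcodable σ] {c : α → Prop} [DecidablePred c] {f g : α → σ}
    (hc : Computable fun a => decide (c a)) (hf : Computable f) (hg : Computable g) :
    Computable fun a => if c a then f a else g a :=
  (Computable.cond hc hf hg).of_eq fun a => by by_cases h : c a <;> simp [h]

theorem comp_decide_and {p q : α → Prop} [DecidablePred p] [DecidablePred q]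
    (hp : Computable fun a => decide (p a)) (hq : Computable fun a => decide (q a)) :
    Computable fun a => decide (p a ∧ q a) :=
  (comp_and hp hq).of_eq fun a => by simp

/-- Bounded sums of a computable family are computable. -/
theorem comp_sum {f : α × ℕ → ℕ} {n : α → ℕ} (hf : Computable f) (hn : Computable n) :
    Computable fun a => ∑ i ∈ Finset.range (n a), f (a, i) := by
  have h : Computable₂ fun (a : α) (p : ℕ × ℕ) => p.2 + f (a, p.1) :=
    comp_add (Computable.snd.comp Computable.snd)
      (hf.comp (Computable.fst.pair (Computable.fst.comp Computable.snd)))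
  refine (Computable.nat_rec hn (Computable.const 0) h).of_eq fun a => ?_
  induction n a with
  | zero => rfl
  | succ k ih => rw [Finset.sum_range_succ, ← ih]

/-- Unbounded search for a witness of a computable test is computable. -/
theorem comp_find {P : α × ℕ → Bool} (hP : Computable P) (hex : ∀ a, ∃ n, P (a, n) = true) :
    ∃ f : α → ℕ, Computable f ∧ ∀ a, P (a, f a) = true := by
  refine ⟨fun a => Nat.find (hex a), Computable.find (P := fun a n => P (a, n) = true) ?_ hex,
    fun a => Nat.find_spec (hex a)⟩
  exact Computable.computablePred (hP.of_eq fun a => by simp)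

end Toolkit

/-! ### Computability of passing between rationals and fractions -/

/-- The pairing code of a rational as a reduced fraction; the official code of `q` in `ℕ` is
the number of such codes below `ratCode q`. -/
def ratCode (q : ℚ) : ℕ := Nat.pair (Equiv.intEquivNat q.num) q.den

/-- The number of common divisors `≥ 2` of `m` and `n` (for `0 < n`). -/
def commonDivs (m n : ℕ) : ℕ :=
  ∑ i ∈ Finset.range n, (if m % (i + 2) = 0 ∧ n % (i + 2) = 0 then 1 else 0)

/-- Tests whether `y` is the pairing code of a reduced fraction. Under `Equiv.intEquivNat` the
integer with code `c` has absolute value `(c + 1) / 2`. -/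
def isRatCode (y : ℕ) : Bool :=
  decide (0 < y.unpair.2) && decide (commonDivs ((y.unpair.1 + 1) / 2) y.unpair.2 = 0)

/-- The number of codes of reduced fractions below `y`. -/
def ratCount (y : ℕ) : ℕ := ∑ i ∈ Finset.range y, (isRatCode i).toNat

theorem natAbs_eq_of_code (z : ℤ) : (Equiv.intEquivNat z + 1) / 2 = z.natAbs := by
  cases z with
  | ofNat n =>
    have : Equiv.intEquivNat (Int.ofNat n) = 2 * n := rfl
    rw [this]; simp; omega
  | negSucc n =>
    have : Equiv.intEquivNat (Int.negSucc n) = 2 * n + 1 := rfl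
    rw [this, Int.natAbs_negSucc]; omega

theorem nonneg_iff_code (z : ℤ) : Equiv.intEquivNat z % 2 = 0 ↔ 0 ≤ z := by
  cases z with
  | ofNat n =>
    have : Equiv.intEquivNat (Int.ofNat n) = 2 * n := rfl
    rw [this]; simp
  | negSucc n =>
    have : Equiv.intEquivNat (Int.negSucc n) = 2 * n + 1 := rfl
    rw [this]; simp

theorem coprime_iff_sum (m n : ℕ) (hn : 0 < n) : Nat.Coprime m n ↔ commonDivs m n = 0 := by
  rw [commonDivs, Finset.sum_eq_zero_iff]
  constructor
  · intro h i _
    rw [if_neg]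
    rintro ⟨h1, h2⟩
    have := Nat.dvd_gcd (Nat.dvd_of_mod_eq_zero h1) (Nat.dvd_of_mod_eq_zero h2)
    rw [h.gcd_eq_one, Nat.dvd_one] at this
    omega
  · intro h
    by_contra hc
    have hg0 : 0 < Nat.gcd m n := Nat.gcd_pos_of_pos_right _ hn
    have hg1 : Nat.gcd m n ≠ 1 := hc
    have hle : Nat.gcd m n ≤ n := Nat.gcd_le_right _ hn
    have := h (Nat.gcd m n - 2) (by rw [Finset.mem_range]; omega)
    rw [show Nat.gcd m n - 2 + 2 = Nat.gcd m n by omega, if_pos] at this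
    · omega
    · exact ⟨Nat.mod_eq_zero_of_dvd (Nat.gcd_dvd_left _ _),
        Nat.mod_eq_zero_of_dvd (Nat.gcd_dvd_right _ _)⟩

theorem isRatCode_iff (y : ℕ) : isRatCode y = true ↔ y ∈ Set.range ratCode := by
  rw [isRatCode, Bool.and_eq_true, decide_eq_true_eq, decide_eq_true_eq]
  constructor
  · rintro ⟨h1, h2⟩
    rw [← coprime_iff_sum _ _ h1] at h2
    refine ⟨⟨Equiv.intEquivNat.symm y.unpair.1, y.unpair.2, h1.ne', ?_⟩, ?_⟩
    · rw [← natAbs_eq_of_code]; simpa using h2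
    · simp [ratCode]
  · rintro ⟨q, rfl⟩
    refine ⟨by simpa [ratCode] using q.den_pos, ?_⟩
    have := (coprime_iff_sum _ _ q.den_pos).1 q.reduced
    simpa only [ratCode, Nat.unpair_pair, natAbs_eq_of_code] using this

theorem comp_commonDivs {α : Type*} [Primcodable α] {f g : α → ℕ} (hf : Computable f)
    (hg : Computable g) : Computable fun a => commonDivs (f a) (g a) := by
  have hi : Computable fun p : α × ℕ => p.2 + 2 :=
    comp_add Computable.snd (Computable.const 2)
  have h1 : Computable fun p : α × ℕ => decide (f p.1 % (p.2 + 2) = 0) :=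
    comp_eq (comp_mod (hf.comp Computable.fst) hi) (Computable.const 0)
  have h2 : Computable fun p : α × ℕ => decide (g p.1 % (p.2 + 2) = 0) :=
    comp_eq (comp_mod (hg.comp Computable.fst) hi) (Computable.const 0)
  have h3 := comp_ite (comp_decide_and h1 h2) (Computable.const 1) (Computable.const 0)
  exact comp_sum h3 hg

theorem comp_isRatCode : Computable isRatCode := by
  have h1 : Computable fun y : ℕ => y.unpair.1 := Computable.fst.comp Computable.unpair
  have h2 : Computable fun y : ℕ => y.unpair.2 := Computable.snd.comp Computable.unpair
  have h3 : Computable fun y : ℕ => (y.unpair.1 + 1) / 2 :=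
    comp_div (comp_add h1 (Computable.const 1)) (Computable.const 2)
  have h4 := comp_lt (Computable.const 0) h2
  have h5 := comp_eq (comp_commonDivs h3 h2) (Computable.const 0)
  exact comp_and h4 h5

/-- The code of a rational in the encoding used by `Computable`. -/
abbrev ratEnc (q : ℚ) : ℕ := @encode ℚ Primcodable.toEncodable q

theorem ratEnc_eq (q : ℚ) : ratEnc q = ratCount (ratCode q) := by
  have h : ratEnc q = List.countP (fun y => @decide _
    (@decidableRangeEncode ℚ Rat.instEncodable y)) (List.range (ratCode q)) := rfl
  have h2 : ∀ y, (isRatCode y).toNat = if isRatCode y = true then 1 else 0 := fun y => by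
    cases isRatCode y <;> rfl
  rw [h, ratCount, Finset.sum_congr rfl (fun y _ => h2 y), ← Finset.card_filter,
    List.countP_eq_length_filter, Finset.card_def,
    Finset.filter_val, Finset.range_val, Multiset.range, Multiset.filter_coe, Multiset.coe_card]
  congr 1
  apply List.filter_congr
  intro x _
  simp only [decide_eq_decide]
  rw [isRatCode_iff]; rfl

theorem comp_ratCount : Computable ratCount :=
  comp_sum (f := fun p : ℕ × ℕ => (isRatCode p.2).toNat)
    (((Primrec.dom_bool Bool.toNat).to_comp.comp comp_isRatCode).comp Computable.snd)
    Computable.id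

/-- The reduced-fraction code of `q` is recovered from the official code by unbounded search. -/
theorem comp_ratCode : Computable ratCode := by
  have hP : Computable fun p : ℚ × ℕ => isRatCode p.2 && decide (ratCount p.2 = ratEnc p.1) :=
    comp_and (comp_isRatCode.comp Computable.snd)
      (comp_eq (comp_ratCount.comp Computable.snd) (Computable.encode.comp Computable.fst))
  obtain ⟨f, hf, hs⟩ := comp_find hP fun q => ⟨ratCode q, by
    rw [Bool.and_eq_true, decide_eq_true_eq]
    exact ⟨(isRatCode_iff _).2 ⟨q, rfl⟩, (ratEnc_eq q).symm⟩⟩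
  refine hf.of_eq fun q => ?_
  have h := hs q
  rw [Bool.and_eq_true, decide_eq_true_eq] at h
  obtain ⟨q', h'⟩ := (isRatCode_iff _).1 h.1
  have h2 := h.2
  simp only at h' h2
  rw [← h', ← ratEnc_eq] at h2
  rw [← h', (@encode_injective ℚ Primcodable.toEncodable) h2]

theorem comp_den : Computable fun q : ℚ => q.den :=
  (Computable.snd.comp (Computable.unpair.comp comp_ratCode)).of_eq fun q => by simp [ratCode]

theorem comp_natAbs_num : Computable fun q : ℚ => q.num.natAbs :=
  (comp_div (comp_add (Computable.fst.comp (Computable.unpair.comp comp_ratCode))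
    (Computable.const 1)) (Computable.const 2)).of_eq fun q => by
      simp [ratCode, natAbs_eq_of_code]

theorem comp_num_nonneg : Computable fun q : ℚ => decide (0 ≤ q.num) :=
  (comp_eq (comp_mod (Computable.fst.comp (Computable.unpair.comp comp_ratCode))
    (Computable.const 2)) (Computable.const 0)).of_eq fun q => by
      simp only [ratCode, Nat.unpair_pair, nonneg_iff_code]

theorem eq_natAbs_div {q : ℚ} (h : 0 ≤ q) : q = (q.num.natAbs : ℚ) / q.den := by
  conv_lhs => rw [← Rat.num_div_den q]
  rw [Nat.cast_natAbs, abs_of_nonneg (Rat.num_nonneg.2 h)]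

/-- The fraction of two computable natural numbers is a computable rational (with `x / 0 = 0`). -/
theorem comp_ratio {α : Type*} [Primcodable α] {f g : α → ℕ} (hf : Computable f)
    (hg : Computable g) : Computable fun a => (f a : ℚ) / (g a : ℚ) := by
  -- the search compares fractions by cross-multiplication; a zero denominator is replaced by `0 / 1`
  let F : α → ℕ := fun a => if g a = 0 then 0 else f a
  let G : α → ℕ := fun a => if g a = 0 then 1 else g a
  have hG0 : ∀ a, (G a : ℚ) ≠ 0 := fun a => by
    by_cases h : g a = 0 <;> simp [G, h]
  have hFG : ∀ a, (f a : ℚ) / (g a : ℚ) = (F a : ℚ) / (G a : ℚ) := fun a => by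
    by_cases h : g a = 0 <;> simp [F, G, h]
  have hz : Computable fun a => decide (g a = 0) := comp_eq hg (Computable.const 0)
  have hF : Computable F := comp_ite hz (Computable.const 0) hf
  have hG : Computable G := comp_ite hz (Computable.const 1) hg
  clear_value F G
  let Q : ℕ → ℚ := Denumerable.ofNat ℚ
  have hQ : Computable Q := Computable.ofNat ℚ
  have hQs : ∀ q, ∃ n, Q n = q := fun q => ⟨_, Denumerable.ofNat_encode q⟩
  clear_value Q
  have ho : Computable fun p : α × ℕ => Q p.2 := hQ.comp Computable.snd
  have h1 : Computable fun p : α × ℕ => decide (0 ≤ (Q p.2).num) := comp_num_nonneg.comp ho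
  have h2 : Computable fun p : α × ℕ => (Q p.2).num.natAbs * G p.1 :=
    comp_mul (comp_natAbs_num.comp ho) (hG.comp Computable.fst)
  have h3 : Computable fun p : α × ℕ => F p.1 * (Q p.2).den :=
    comp_mul (hF.comp Computable.fst) (comp_den.comp ho)
  have key : ∀ a n, (0 ≤ (Q n).num ∧ (Q n).num.natAbs * G a = F a * (Q n).den) ↔
      Q n = (F a : ℚ) / (G a : ℚ) := by
    intro a n
    have hd : ((Q n).den : ℚ) ≠ 0 := by exact_mod_cast Rat.den_nz _
    constructor
    · rintro ⟨h1, h2⟩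
      rw [eq_natAbs_div (Rat.num_nonneg.1 h1), div_eq_div_iff hd (hG0 a)]
      exact_mod_cast h2
    · intro h
      have hnn : 0 ≤ Q n := by rw [h]; positivity
      refine ⟨Rat.num_nonneg.2 hnn, ?_⟩
      rw [eq_natAbs_div hnn, div_eq_div_iff hd (hG0 a)] at h
      exact_mod_cast h
  obtain ⟨k, hk, hs⟩ := comp_find (comp_and h1 (comp_eq h2 h3)) fun a => by
    obtain ⟨n, hn⟩ := hQs ((F a : ℚ) / (G a : ℚ))
    refine ⟨n, ?_⟩
    rw [Bool.and_eq_true, decide_eq_true_eq, decide_eq_true_eq]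
    exact (key a n).2 hn
  refine (hQ.comp hk).of_eq fun a => ?_
  rw [hFG, ← key]
  have := hs a
  rw [Bool.and_eq_true, decide_eq_true_eq, decide_eq_true_eq] at this
  exact this

/-- Bounded sums of computable fractions are computable. -/
theorem comp_rat_sum {α : Type*} [Primcodable α] {f g : α × ℕ → ℕ} {n : α → ℕ}
    (hf : Computable f) (hg : Computable g) (hg0 : ∀ p, 0 < g p) (hn : Computable n) :
    Computable fun a => ∑ i ∈ Finset.range (n a), (f (a, i) : ℚ) / (g (a, i) : ℚ) := by
  -- the running sum is kept as an unreduced pair (numerator, denominator)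
  let step : α → ℕ × ℕ × ℕ → ℕ × ℕ := fun a p =>
    (p.2.1 * g (a, p.1) + f (a, p.1) * p.2.2, p.2.2 * g (a, p.1))
  have hx : Computable fun q : α × ℕ × ℕ × ℕ => (q.1, q.2.1) :=
    Computable.fst.pair (Computable.fst.comp Computable.snd)
  have h2 : Computable fun q : α × ℕ × ℕ × ℕ => q.2.2 := Computable.snd.comp Computable.snd
  have hs : Computable₂ step :=
    Computable.pair (comp_add (comp_mul (Computable.fst.comp h2) (hg.comp hx))
      (comp_mul (hf.comp hx) (Computable.snd.comp h2)))
      (comp_mul (Computable.snd.comp h2) (hg.comp hx))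
  have hr := Computable.nat_rec hn (Computable.const (0, 1)) hs
  refine (comp_ratio (Computable.fst.comp hr) (Computable.snd.comp hr)).of_eq fun a => ?_
  suffices H : ∀ k : ℕ, 0 < (Nat.rec (0, 1) (fun y IH => step a (y, IH)) k : ℕ × ℕ).2 ∧
      ((Nat.rec (0, 1) (fun y IH => step a (y, IH)) k : ℕ × ℕ).1 : ℚ) /
      ((Nat.rec (0, 1) (fun y IH => step a (y, IH)) k : ℕ × ℕ).2 : ℚ) =
      ∑ i ∈ Finset.range k, (f (a, i) : ℚ) / (g (a, i) : ℚ) from (H (n a)).2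
  intro k
  induction k with
  | zero => simp
  | succ k ih =>
    obtain ⟨ih1, ih2⟩ := ih
    have hgk : (g (a, k) : ℚ) ≠ 0 := by exact_mod_cast (hg0 _).ne'
    have hk : ((Nat.rec (0, 1) (fun y IH => step a (y, IH)) k : ℕ × ℕ).2 : ℚ) ≠ 0 := by
      exact_mod_cast ih1.ne'
    refine ⟨Nat.mul_pos ih1 (hg0 _), ?_⟩
    rw [Finset.sum_range_succ, ← ih2, div_add_div _ _ hk hgk]
    simp only [step]
    push_cast
    ring

/-- Comparing a fixed rational with a nonnegative computable one is computable. -/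
theorem comp_rat_lt {α : Type*} [Primcodable α] {f : α → ℚ} (hf : Computable f)
    (h0 : ∀ a, 0 ≤ f a) (r : ℚ) : Computable fun a => decide (r < f a) := by
  by_cases hr : r < 0
  · exact (Computable.const true).of_eq fun a => by simp [hr.trans_le (h0 a)]
  · push Not at hr
    refine (comp_lt (comp_mul (Computable.const r.num.natAbs) (comp_den.comp hf))
      (comp_mul (comp_natAbs_num.comp hf) (Computable.const r.den))).of_eq fun a => ?_
    rw [decide_eq_decide]
    have h1 : (0 : ℚ) < r.den := by exact_mod_cast r.den_pos
    have h2 : (0 : ℚ) < (f a).den := by exact_mod_cast (f a).den_pos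
    conv_rhs => rw [eq_natAbs_div hr, eq_natAbs_div (h0 a), div_lt_div_iff₀ h1 h2]
    exact_mod_cast Iff.rfl

/-! ### Prefixes and cylinders -/

theorem pref_length (X : ℕ → Bool) (n : ℕ) : (pref X n).length = n := by simp [pref]

theorem pref_succ (X : ℕ → Bool) (n : ℕ) : pref X (n + 1) = pref X n ++ [X n] := by
  simp [pref, List.range_succ]

theorem pref_take (X : ℕ → Bool) {i n : ℕ} (h : i ≤ n) : (pref X n).take i = pref X i := by
  simp [pref, ← List.map_take, List.take_range, min_eq_left h]

theorem measurableSet_cylinder (w : List Bool) : MeasurableSet (cylinder w) := by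
  have : cylinder w = ⋂ (i : ℕ) (h : i < w.length), {X : ℕ → Bool | X i = w[i]} := by
    ext X
    simp only [_root_.cylinder, Set.mem_ofPred_eq, Set.mem_iInter]
    constructor
    · intro h i hi
      have : (pref X w.length)[i]'(by rw [pref_length]; exact hi) = X i := by simp [pref]
      rw [← this]
      simp only [h]
    · intro h
      apply List.ext_getElem (pref_length _ _)
      intro i h1 h2
      rw [← h i h2]
      simp [pref]
  rw [this]
  refine MeasurableSet.iInter fun i => MeasurableSet.iInter fun h => ?_
  have hm : Measurable fun X : ℕ → Bool => X i := measurable_pi_apply i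
  exact hm (measurableSet_singleton (w[i]))

/-! ### Ville's inequality -/

/-- The maximal inequality for a supermartingale `M` started at `w` and run for `m` steps. -/
theorem ville_aux (μ : Measure (ℕ → Bool)) (hμ : ∀ w : List Bool, μ (cylinder w) = (2 ^ w.length)⁻¹)
    (M : List Bool → ℝ) (h0 : ∀ w, 0 ≤ M w)
    (hM : ∀ w, M (w ++ [false]) + M (w ++ [true]) ≤ 2 * M w) (a : ℝ) (ha : 0 < a) (m : ℕ) :
    ∀ w : List Bool, μ {Y | Y ∈ cylinder w ∧ ∃ i ≤ m, a < M (pref Y (w.length + i))} ≤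
      ENNReal.ofReal ((2 ^ w.length)⁻¹ * (M w / a)) := by
  have hbig : ∀ w : List Bool, a < M w → ∀ S : Set (ℕ → Bool), S ⊆ cylinder w →
      μ S ≤ ENNReal.ofReal ((2 ^ w.length)⁻¹ * (M w / a)) := by
    intro w hw S hS
    refine (measure_mono hS).trans ?_
    rw [hμ]
    have : ((2 : ENNReal) ^ w.length)⁻¹ = ENNReal.ofReal ((2 ^ w.length)⁻¹) := by
      rw [ENNReal.ofReal_inv_of_pos (by positivity), ENNReal.ofReal_pow (by norm_num)]
      simp
    rw [this]
    apply ENNReal.ofReal_le_ofReal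
    have h1 : 1 ≤ M w / a := by rw [le_div_iff₀ ha]; linarith
    have h2 : (0 : ℝ) ≤ (2 ^ w.length)⁻¹ := by positivity
    nlinarith
  induction m with
  | zero =>
    intro w
    by_cases hw : a < M w
    · exact hbig w hw _ fun Y hY => hY.1
    · have : {Y | Y ∈ cylinder w ∧ ∃ i ≤ 0, a < M (pref Y (w.length + i))} = ∅ := by
        ext Y
        simp only [Set.mem_ofPred_eq, Set.mem_empty_iff_false, iff_false]
        rintro ⟨h1, i, hi, h2⟩
        obtain rfl : i = 0 := by omega
        rw [Nat.add_zero, h1] at h2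
        exact hw h2
      rw [this]; simp
  | succ m ih =>
    intro w
    by_cases hw : a < M w
    · exact hbig w hw _ fun Y hY => hY.1
    · have hsub : {Y | Y ∈ cylinder w ∧ ∃ i ≤ m + 1, a < M (pref Y (w.length + i))} ⊆
          {Y | Y ∈ cylinder (w ++ [false]) ∧
            ∃ i ≤ m, a < M (pref Y ((w ++ [false]).length + i))} ∪
          {Y | Y ∈ cylinder (w ++ [true]) ∧
            ∃ i ≤ m, a < M (pref Y ((w ++ [true]).length + i))} := by
        rintro Y ⟨h1, i, hi, h2⟩
        have h1' : pref Y w.length = w := h1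
        rcases i with _ | i
        · rw [Nat.add_zero, h1'] at h2
          exact absurd h2 hw
        · have key : ∀ b, Y w.length = b → Y ∈ {Y | Y ∈ cylinder (w ++ [b]) ∧
              ∃ i ≤ m, a < M (pref Y ((w ++ [b]).length + i))} := by
            intro b hb
            refine ⟨?_, i, by omega, ?_⟩
            · simp [_root_.cylinder, pref_succ, h1', hb]
            · rw [List.length_append, List.length_singleton]
              rwa [show w.length + (i + 1) = w.length + 1 + i by ring] at h2
          rcases hY : Y w.length with _ | _
          · exact Or.inl (key _ hY)
          · exact Or.inr (key _ hY)
      refine (measure_mono hsub).trans ((measure_union_le _ _).trans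
        ((add_le_add (ih _) (ih _)).trans ?_))
      rw [← ENNReal.ofReal_add
        (mul_nonneg (by positivity) (div_nonneg (h0 _) ha.le))
        (mul_nonneg (by positivity) (div_nonneg (h0 _) ha.le))]
      apply ENNReal.ofReal_le_ofReal
      simp only [List.length_append, List.length_singleton]
      have h3 : (0 : ℝ) ≤ (2 ^ (w.length + 1))⁻¹ * a⁻¹ := by positivity
      calc ((2 : ℝ) ^ (w.length + 1))⁻¹ * (M (w ++ [false]) / a) +
            (2 ^ (w.length + 1))⁻¹ * (M (w ++ [true]) / a)
          = (2 ^ (w.length + 1))⁻¹ * a⁻¹ * (M (w ++ [false]) + M (w ++ [true])) := by ring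
        _ ≤ (2 ^ (w.length + 1))⁻¹ * a⁻¹ * (2 * M w) := mul_le_mul_of_nonneg_left (hM w) h3
        _ = (2 ^ w.length)⁻¹ * (M w / a) := by
          rw [pow_succ]; field_simp

/-- Ville's inequality for a nonnegative supermartingale with initial capital at most `1`. -/
theorem ville (μ : Measure (ℕ → Bool)) (hμ : ∀ w : List Bool, μ (cylinder w) = (2 ^ w.length)⁻¹)
    (M : List Bool → ℝ) (h0 : ∀ w, 0 ≤ M w)
    (hM : ∀ w, M (w ++ [false]) + M (w ++ [true]) ≤ 2 * M w) (h1 : M [] ≤ 1) (n : ℕ) :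
    μ {Y | ∃ i, 2 ^ n < M (pref Y i)} ≤ (2 ^ n)⁻¹ := by
  have hU : {Y | ∃ i, 2 ^ n < M (pref Y i)} =
      ⋃ m : ℕ, {Y | ∃ i ≤ m, 2 ^ n < M (pref Y i)} := by
    ext Y
    simp only [Set.mem_ofPred_eq, Set.mem_iUnion]
    exact ⟨fun ⟨i, h⟩ => ⟨i, i, le_rfl, h⟩, fun ⟨_, i, _, h⟩ => ⟨i, h⟩⟩
  have hmono : Monotone fun m : ℕ => {Y | ∃ i ≤ m, 2 ^ n < M (pref Y i)} :=
    fun m m' hm Y ⟨i, hi, h⟩ => ⟨i, hi.trans hm, h⟩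
  rw [hU, hmono.measure_iUnion]
  refine iSup_le fun m => ?_
  have := ville_aux μ hμ M h0 hM (2 ^ n) (by positivity) m []
  simp only [List.length_nil, Nat.zero_add] at this
  refine (measure_mono ?_).trans (this.trans ?_)
  · intro Y hY
    exact ⟨by simp [_root_.cylinder, pref], hY⟩
  · have h2 : ((2 : ENNReal) ^ n)⁻¹ = ENNReal.ofReal ((2 ^ n)⁻¹) := by
      rw [ENNReal.ofReal_inv_of_pos (by positivity), ENNReal.ofReal_pow (by norm_num)]
      simp
    rw [h2]
    apply ENNReal.ofReal_le_ofReal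
    have : (0 : ℝ) ≤ (2 ^ n)⁻¹ := by positivity
    simp only [pow_zero, inv_one, one_mul, div_eq_mul_inv]
    nlinarith

/-! ### From supermartingales to learning functions -/

/-- The levels `k < |w|` such that `M` exceeds `2 ^ (k + 1)` at some prefix of `w`. The bound
`k < |w|` keeps the set finite and loses nothing for supermartingales with `M [] ≤ 1`. -/
noncomputable def levels (M : List Bool → ℝ) (w : List Bool) : Finset ℕ :=
  open Classical in
  {k ∈ Finset.range w.length | ∃ i ∈ Finset.range (w.length + 1), 2 ^ (k + 1) < M (w.take i)}

theorem mem_levels {M : List Bool → ℝ} {w : List Bool} {k : ℕ} : k ∈ levels M w ↔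
    k < w.length ∧ ∃ i ∈ Finset.range (w.length + 1), 2 ^ (k + 1) < M (w.take i) := by
  simp [levels]

/-- The learning function that says yes at `w` exactly when `w` has more levels than `w` without
its last bit, that is, when the running maximum of `M` passes a new power of two at `w`. -/
noncomputable def learner (M : List Bool → ℝ) (w : List Bool) : Bool :=
  decide ((levels M w.dropLast).card < (levels M w).card)

theorem levels_mono (M : List Bool → ℝ) (w : List Bool) (b : Bool) :
    levels M w ⊆ levels M (w ++ [b]) := by
  intro k hk
  rw [mem_levels] at hk ⊢
  obtain ⟨h1, i, hi, h2⟩ := hk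
  rw [Finset.mem_range] at hi
  refine ⟨by simp; omega, i, by simp; omega, ?_⟩
  rwa [List.take_append_of_le_length (by omega)]

/-- Capital at most doubles in one step, so at most one new level is reached. -/
theorem levels_card_le {M : List Bool → ℝ} (h0 : ∀ w, 0 ≤ M w)
    (hM : ∀ w, M (w ++ [false]) + M (w ++ [true]) ≤ 2 * M w) (w : List Bool) (b : Bool) :
    (levels M (w ++ [b])).card ≤ (levels M w).card + 1 := by
  have hsub : levels M (w ++ [b]) ⊆ insert 0 ((levels M w).image Nat.succ) := by
    intro k hk
    rcases k with _ | k
    · simp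
    · refine Finset.mem_insert_of_mem (Finset.mem_image_of_mem _ ?_)
      rw [mem_levels] at hk ⊢
      obtain ⟨h1, i, hi, h2⟩ := hk
      simp only [List.length_append, List.length_singleton, Finset.mem_range] at h1 hi
      have hp : (2 : ℝ) ^ (k + 1 + 1) = 2 * 2 ^ (k + 1) := by ring
      have hpos : (0 : ℝ) < 2 ^ (k + 1) := by positivity
      refine ⟨by omega, ?_⟩
      by_cases hiw : i ≤ w.length
      · refine ⟨i, by simp; omega, ?_⟩
        rw [List.take_append_of_le_length hiw] at h2
        linarith
      · refine ⟨w.length, by simp, ?_⟩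
        rw [List.take_of_length_le (by simp; omega)] at h2
        rw [List.take_length]
        have := hM w
        have h3 := h0 (w ++ [false])
        have h4 := h0 (w ++ [true])
        cases b <;> linarith
  exact (Finset.card_le_card hsub).trans ((Finset.card_insert_le _ _).trans
    (Nat.add_le_add_right Finset.card_image_le 1))

theorem sum_learner {M : List Bool → ℝ} (h0 : ∀ w, 0 ≤ M w)
    (hM : ∀ w, M (w ++ [false]) + M (w ++ [true]) ≤ 2 * M w) (w : List Bool) :
    ∑ i ∈ Finset.range (w.length + 1), (if learner M (w.take i) then 1 else 0) =
      (levels M w).card := by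
  induction w using List.reverseRecOn with
  | nil => simp [learner, levels]
  | append_singleton w b ih =>
    rw [List.length_append, List.length_singleton, Finset.sum_range_succ]
    have : ∀ i ∈ Finset.range (w.length + 1),
        (if learner M ((w ++ [b]).take i) then 1 else 0) =
        (if learner M (w.take i) then 1 else 0) := by
      intro i hi
      rw [Finset.mem_range] at hi
      rw [List.take_append_of_le_length (by omega)]
    rw [Finset.sum_congr rfl this, ih, List.take_of_length_le (by simp)]
    have h1 := levels_card_le h0 hM w b
    have h2 := Finset.card_le_card (levels_mono M w b)
    simp only [learner, List.dropLast_concat, decide_eq_true_eq]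
    split_ifs <;> omega

theorem pathAvg_learner {M : List Bool → ℝ} (h0 : ∀ w, 0 ≤ M w)
    (hM : ∀ w, M (w ++ [false]) + M (w ++ [true]) ≤ 2 * M w) (w : List Bool) :
    pathAvg (learner M) w = (levels M w).card / w.length := by
  rw [pathAvg, ← sum_learner h0 hM w]
  push_cast
  rfl

/-- A set of positions of size at least `n` already has `n` elements in an initial segment. -/
theorem exists_count_ge (p : ℕ → Bool) (n : ℕ) (h : (n : ℕ∞) ≤ {m : ℕ | p m = true}.encard) :
    ∃ N, n ≤ ∑ i ∈ Finset.range (N + 1), if p i then 1 else 0 := by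
  obtain ⟨t, ht, hc⟩ := Set.exists_subset_encard_eq h
  have hfin : t.Finite := Set.finite_of_encard_eq_coe hc
  obtain ⟨N, hN⟩ := hfin.bddAbove
  refine ⟨N, ?_⟩
  rw [← Finset.card_filter]
  rw [hfin.encard_eq_coe_toFinset_card] at hc
  have hc' : hfin.toFinset.card = n := by exact_mod_cast hc
  rw [← hc']
  apply Finset.card_le_card
  intro i hi
  rw [Set.Finite.mem_toFinset] at hi
  simp only [Finset.mem_filter, Finset.mem_range]
  exact ⟨Nat.lt_succ_of_le (hN hi), ht hi⟩

theorem measureCondition_learner (μ : Measure (ℕ → Bool))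
    (hμ : ∀ w : List Bool, μ (cylinder w) = (2 ^ w.length)⁻¹)
    {M : List Bool → ℝ} (h0 : ∀ w, 0 ≤ M w)
    (hM : ∀ w, M (w ++ [false]) + M (w ++ [true]) ≤ 2 * M w) (h1 : M [] ≤ 1) :
    MeasureCondition μ (learner M) := by
  intro n
  rcases Nat.eq_zero_or_pos n with rfl | hn
  · have h := hμ []
    have : cylinder [] = Set.univ := by ext; simp [_root_.cylinder, pref]
    rw [this] at h
    exact (measure_mono (Set.subset_univ _)).trans h.le
  refine (measure_mono ?_).trans (ville μ hμ M h0 hM h1 n)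
  intro Y hY
  obtain ⟨N, hN⟩ := exists_count_ge (fun m => learner M (pref Y m)) n hY
  have hs := sum_learner h0 hM (pref Y N)
  rw [pref_length] at hs
  rw [Finset.sum_congr rfl (g := fun i => if learner M (pref Y i) then 1 else 0)
    (fun i hi => by rw [pref_take Y (Nat.le_of_lt_succ (Finset.mem_range.1 hi))])] at hs
  rw [hs] at hN
  -- `n` distinct levels include one that is at least `n - 1`
  obtain ⟨k, hk, hkn⟩ : ∃ k ∈ levels M (pref Y N), n ≤ k + 1 := by
    by_contra hcon
    push Not at hcon
    have : levels M (pref Y N) ⊆ Finset.range (n - 1) := fun k hk => by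
      have := hcon k hk
      rw [Finset.mem_range]; omega
    have := Finset.card_le_card this
    rw [Finset.card_range] at this
    omega
  rw [mem_levels] at hk
  obtain ⟨_, i, hi, h2⟩ := hk
  rw [pref_length, Finset.mem_range] at hi
  rw [pref_take Y (by omega)] at h2
  exact ⟨i, (pow_le_pow_right₀ (by norm_num) hkn).trans_lt h2⟩

theorem levels_subset_of_le {M M' : List Bool → ℝ} (h : ∀ w, M w ≤ M' w) (w : List Bool) :
    levels M w ⊆ levels M' w := by
  intro k hk
  rw [mem_levels] at hk ⊢
  obtain ⟨h1, i, hi, h2⟩ := hk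
  exact ⟨h1, i, hi, h2.trans_le (h _)⟩

/-- The number of levels reached by a rational-valued function, as a sum of Boolean tests on
numerators and denominators. -/
theorem levels_card_eq_sum (h : List Bool → ℚ) (h0 : ∀ w, 0 ≤ h w) (w : List Bool) :
    (levels (fun v => (h v : ℝ)) w).card =
      ∑ k ∈ Finset.range w.length,
        if 0 < ∑ i ∈ Finset.range (w.length + 1),
          (if 2 ^ (k + 1) * (h (w.take i)).den < (h (w.take i)).num.natAbs then 1 else 0)
        then 1 else 0 := by
  have key : ∀ (k : ℕ) (v : List Bool),
      2 ^ (k + 1) * (h v).den < (h v).num.natAbs ↔ (2 : ℝ) ^ (k + 1) < (h v : ℝ) := by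
    intro k v
    have h1 : ((2 : ℝ) ^ (k + 1) < (h v : ℝ)) ↔ (2 : ℚ) ^ (k + 1) < h v := by
      rw [← Rat.cast_lt (K := ℝ)]; push_cast; rfl
    have hd : (0 : ℚ) < (h v).den := by exact_mod_cast (h v).den_pos
    rw [h1]
    conv_rhs => rw [eq_natAbs_div (h0 v)]
    rw [lt_div_iff₀ hd]
    exact_mod_cast Iff.rfl
  rw [← Finset.card_filter]
  congr 1
  ext k
  rw [mem_levels]
  simp only [Finset.mem_filter, Finset.mem_range, Finset.sum_pos_iff]
  refine and_congr_right fun _ => exists_congr fun i => and_congr_right fun _ => ?_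
  rw [← key]
  split_ifs with hh <;> simp [hh]

theorem comp_levels_card {h : List Bool × ℕ → ℚ} (hc : Computable h)
    (h0 : ∀ w t, 0 ≤ h (w, t)) :
    Computable fun p : List Bool × ℕ => (levels (fun v => (h (v, p.2) : ℝ)) p.1).card := by
  have hlen : Computable fun p : List Bool × ℕ => p.1.length :=
    Computable.list_length.comp Computable.fst
  have hq : Computable fun a : ((List Bool × ℕ) × ℕ) × ℕ => h (a.1.1.1.take a.2, a.1.1.2) := by
    refine hc.comp (Computable.pair ?_ ?_)
    · exact Primrec.list_take.to_comp.comp Computable.snd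
        (Computable.fst.comp (Computable.fst.comp Computable.fst))
    · exact Computable.snd.comp (Computable.fst.comp Computable.fst)
  have hk : Computable fun a : ((List Bool × ℕ) × ℕ) × ℕ => 2 ^ (a.1.2 + 1) :=
    comp_pow (Computable.const 2)
      (comp_add (Computable.snd.comp Computable.fst) (Computable.const 1))
  have hterm : Computable fun a : ((List Bool × ℕ) × ℕ) × ℕ =>
      if 2 ^ (a.1.2 + 1) * (h (a.1.1.1.take a.2, a.1.1.2)).den <
        (h (a.1.1.1.take a.2, a.1.1.2)).num.natAbs then 1 else 0 :=
    comp_ite (comp_lt (comp_mul hk (comp_den.comp hq)) (comp_natAbs_num.comp hq))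
      (Computable.const 1) (Computable.const 0)
  have hin := comp_sum hterm
    (n := fun a : (List Bool × ℕ) × ℕ => a.1.1.length + 1)
    (comp_add (hlen.comp Computable.fst) (Computable.const 1))
  have hbit : Computable fun a : (List Bool × ℕ) × ℕ =>
      if 0 < ∑ i ∈ Finset.range (a.1.1.length + 1),
        (if 2 ^ (a.2 + 1) * (h (a.1.1.take i, a.1.2)).den <
          (h (a.1.1.take i, a.1.2)).num.natAbs then 1 else 0) then 1 else 0 :=
    comp_ite (comp_lt (Computable.const 0) hin) (Computable.const 1) (Computable.const 0)
  refine (comp_sum hbit hlen).of_eq fun p => ?_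
  rw [levels_card_eq_sum (fun v => h (v, p.2)) (fun v => h0 v p.2)]

theorem lsc_levels {M : List Bool → ℝ} (hM : LowerSemicomputable M) :
    LowerSemicomputable fun w => ((levels M w).card : ℝ) / w.length := by
  obtain ⟨h, hc, hh, hlim⟩ := hM
  refine ⟨fun p => ((levels (fun v => (h (v, p.2) : ℝ)) p.1).card : ℚ) / (p.1.length : ℕ),
    comp_ratio (comp_levels_card hc fun w t => (hh w t).1)
      (Computable.list_length.comp Computable.fst), fun w t => ⟨by positivity, ?_, ?_⟩, ?_⟩
  · have : (levels (fun v => (h (v, t) : ℝ)) w).card ≤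
        (levels (fun v => (h (v, t + 1) : ℝ)) w).card :=
      Finset.card_le_card (levels_subset_of_le
        (fun v => by exact_mod_cast (hh v t).2.1) w)
    simp only
    gcongr
  · have : (levels (fun v => (h (v, t) : ℝ)) w).card ≤ (levels M w).card :=
      Finset.card_le_card (levels_subset_of_le (fun v => (hh v t).2.2) w)
    push_cast
    gcongr
  · intro w
    have hev : ∀ᶠ t in atTop, levels (fun v => (h (v, t) : ℝ)) w = levels M w := by
      have : ∀ k ∈ levels M w, ∀ᶠ t in atTop, k ∈ levels (fun v => (h (v, t) : ℝ)) w := by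
        intro k hk
        rw [mem_levels] at hk
        obtain ⟨h1, i, hi, h2⟩ := hk
        filter_upwards [(hlim (w.take i)).eventually (lt_mem_nhds h2)] with t ht
        rw [mem_levels]
        exact ⟨h1, i, hi, ht⟩
      filter_upwards [(Filter.eventually_all_finset _).2 this] with t ht
      exact (levels_subset_of_le (fun v => (hh v t).2.2) w).antisymm ht
    refine tendsto_const_nhds.congr' ?_
    filter_upwards [hev] with t ht
    simp [ht]

theorem lsc_scale {d : List Bool → ℝ} (hd : LowerSemicomputable d) (c : ℚ) (hc : 0 ≤ c) (m : ℕ) :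
    LowerSemicomputable fun w => (c : ℝ) ^ w.length * d w / 2 ^ m := by
  obtain ⟨h, hcomp, hh, hlim⟩ := hd
  refine ⟨fun p => c ^ p.1.length * h p / 2 ^ m, ?_, fun w t => ⟨?_, ?_, ?_⟩, ?_⟩
  · have hlen : Computable fun p : List Bool × ℕ => p.1.length :=
      Computable.list_length.comp Computable.fst
    have hnum : Computable fun p => c.num.natAbs ^ p.1.length * (h p).num.natAbs :=
      comp_mul (comp_pow (Computable.const _) hlen) (comp_natAbs_num.comp hcomp)
    have hden : Computable fun p => c.den ^ p.1.length * (h p).den * 2 ^ m :=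
      comp_mul (comp_mul (comp_pow (Computable.const _) hlen) (comp_den.comp hcomp))
        (Computable.const _)
    refine (comp_ratio hnum hden).of_eq fun p => ?_
    conv_rhs => rw [eq_natAbs_div hc, eq_natAbs_div (hh p.1 p.2).1]
    push_cast
    rw [div_pow, div_mul_div_comm, div_div]
  · have := (hh w t).1
    positivity
  · have := (hh w t).2.1
    simp only
    gcongr
  · have := (hh w t).2.2
    push_cast
    have : (0 : ℝ) ≤ c := by exact_mod_cast hc
    gcongr
  · intro w
    push_cast
    exact ((hlim w).const_mul _).div_const _

theorem pathAvg_nonneg (l : List Bool → Bool) (w : List Bool) : 0 ≤ pathAvg l w :=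
  div_nonneg (Finset.sum_nonneg fun i _ => by split_ifs <;> norm_num) (Nat.cast_nonneg _)

theorem pathAvg_le_two (l : List Bool → Bool) (w : List Bool) : pathAvg l w ≤ 2 := by
  rw [pathAvg]
  rcases Nat.eq_zero_or_pos w.length with h | h
  · simp [h]
  · have h' : (1 : ℝ) ≤ w.length := by exact_mod_cast h
    rw [div_le_iff₀ (by linarith)]
    calc _ ≤ ∑ i ∈ Finset.range (w.length + 1), (1 : ℝ) :=
          Finset.sum_le_sum fun i _ => by split_ifs <;> norm_num
      _ = w.length + 1 := by simp
      _ ≤ 2 * w.length := by linarith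

theorem pathAvg_bdd (l : List Bool → Bool) (X : ℕ → Bool) :
    IsBoundedUnder (· ≤ ·) atTop fun n => pathAvg l (pref X n) :=
  isBoundedUnder_of ⟨2, fun _ => pathAvg_le_two _ _⟩

theorem pathAvg_cobdd (l : List Bool → Bool) (X : ℕ → Bool) :
    IsCoboundedUnder (· ≤ ·) atTop fun n => pathAvg l (pref X n) :=
  IsBoundedUnder.isCoboundedUnder_le (isBoundedUnder_of ⟨0, fun _ => pathAvg_nonneg _ _⟩)

/-- If the capital at `w` exceeds `2 · 2 ^ (u |w|)` then the path average at `w` is at least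
`u`. -/
theorem le_pathAvg_learner {M : List Bool → ℝ} (h0 : ∀ w, 0 ≤ M w)
    (hM : ∀ w, M (w ++ [false]) + M (w ++ [true]) ≤ 2 * M w) (w : List Bool) (hw : 0 < w.length)
    (u : ℝ) (hu : u ≤ 1) (h : 2 * (2 : ℝ) ^ (u * w.length) < M w) :
    u ≤ pathAvg (learner M) w := by
  rw [pathAvg_learner h0 hM]
  have hw' : (0 : ℝ) < w.length := by exact_mod_cast hw
  rcases le_or_gt u 0 with hu0 | hu0
  · exact hu0.trans (by positivity)
  rw [le_div_iff₀ hw']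
  set j := ⌈u * w.length⌉₊ with hj
  have hjw : j ≤ w.length := by
    rw [hj, Nat.ceil_le]; nlinarith
  have hjlt : (j : ℝ) < u * w.length + 1 := Nat.ceil_lt_add_one (by positivity)
  have h2j : (2 : ℝ) ^ j < M w := by
    refine lt_of_le_of_lt ?_ h
    rw [← Real.rpow_natCast, show 2 * (2 : ℝ) ^ (u * w.length) = 2 ^ (u * w.length + 1) by
      rw [Real.rpow_add (by norm_num), Real.rpow_one]; ring]
    exact Real.rpow_le_rpow_of_exponent_le (by norm_num) hjlt.le
  have hsub : Finset.range j ⊆ levels M w := by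
    intro k hk
    rw [Finset.mem_range] at hk
    rw [mem_levels]
    refine ⟨by omega, w.length, by simp, ?_⟩
    rw [List.take_length]
    exact lt_of_le_of_lt (pow_le_pow_right₀ (by norm_num) (by omega)) h2j
  have hcard := Finset.card_le_card hsub
  rw [Finset.card_range] at hcard
  calc u * w.length ≤ j := Nat.le_ceil _
    _ ≤ _ := by exact_mod_cast hcard

/-- A lower semicomputable `s`-gale yields an algorithmic `s'`-learner for every `s' > s`. -/
theorem learner_of_gale (μ : Measure (ℕ → Bool))
    (hμ : ∀ w : List Bool, μ (cylinder w) = (2 ^ w.length)⁻¹) (Γ : Set (ℕ → Bool))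
    {s s' : ℝ} (hs : 0 ≤ s) (hss : s < s') {d : List Bool → ℝ} (hd : IsGale s d)
    (hlsc : LowerSemicomputable d) (hsucc : ∀ X ∈ Γ, SucceedsOn d X) :
    ∃ l : List Bool → Bool, LowerSemicomputable (pathAvg l) ∧ ∀ X ∈ Γ, SLearns μ l s' X := by
  obtain ⟨c, hc1, hc2⟩ := exists_rat_btwn
    (Real.rpow_lt_rpow_of_exponent_lt (x := 2) (by norm_num) (show 1 - s' < 1 - s by linarith))
  have hc0 : (0 : ℝ) < c := lt_trans (by positivity) hc1
  have hc0' : (0 : ℚ) < c := by exact_mod_cast hc0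
  obtain ⟨m, hm⟩ := pow_unbounded_of_one_lt (d []) (show (1 : ℝ) < 2 by norm_num)
  -- discounting the gale by `c < 2 ^ (1 - s)` makes it a supermartingale
  set M : List Bool → ℝ := fun w => (c : ℝ) ^ w.length * d w / 2 ^ m with hMdef
  have h0 : ∀ w, 0 ≤ M w := fun w => by
    have := hd.1 w
    simp only [hMdef]
    positivity
  have hM : ∀ w, M (w ++ [false]) + M (w ++ [true]) ≤ 2 * M w := by
    intro w
    have h1 : M (w ++ [false]) + M (w ++ [true]) = (c * 2 ^ s) * M w := by
      simp only [hMdef, List.length_append, List.length_singleton]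
      rw [← add_div, ← mul_add, ← hd.2 w]
      ring
    rw [h1]
    refine mul_le_mul_of_nonneg_right ?_ (h0 w)
    calc (c : ℝ) * 2 ^ s ≤ 2 ^ (1 - s) * 2 ^ s := by gcongr
      _ = 2 := by rw [← Real.rpow_add (by norm_num)]; simp
  have h1 : M [] ≤ 1 := by
    simp only [hMdef, List.length_nil, pow_zero, one_mul]
    rw [div_le_one (by positivity)]
    exact hm.le
  refine ⟨learner M, ?_, fun X hX => ⟨measureCondition_learner μ hμ h0 hM h1, ?_⟩⟩
  · have : pathAvg (learner M) = fun w => ((levels M w).card : ℝ) / w.length :=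
      funext (pathAvg_learner h0 hM)
    rw [this]
    exact lsc_levels (lsc_scale hlsc c hc0'.le m)
  · refine le_limsup_of_frequently_le ?_ (pathAvg_bdd _ _)
    refine ((hsucc X hX (2 * 2 ^ m)).and_eventually (eventually_gt_atTop 0)).mono ?_
    rintro n ⟨hn, hn0⟩
    refine le_pathAvg_learner h0 hM _ (by rwa [pref_length]) _ (by linarith) ?_
    simp only [hMdef, pref_length]
    rw [lt_div_iff₀ (by positivity), Real.rpow_mul (by norm_num), Real.rpow_natCast]
    have h3 : ((2 : ℝ) ^ (1 - s')) ^ n ≤ (c : ℝ) ^ n := by gcongr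
    have h4 : (0 : ℝ) < (2 ^ (1 - s')) ^ n := by positivity
    have h5 : (0 : ℝ) < 2 * 2 ^ m := by positivity
    calc 2 * ((2 : ℝ) ^ (1 - s')) ^ n * 2 ^ m = (2 ^ (1 - s')) ^ n * (2 * 2 ^ m) := by ring
      _ ≤ (c : ℝ) ^ n * (2 * 2 ^ m) := by gcongr
      _ < (c : ℝ) ^ n * d (pref X n) := by gcongr

/-! ### From learning functions to gales -/

/-- The capital at `w` of the gale, with growth factor `b`, that has capital `1` at the single
string `v`: it puts everything on the path to `v` and bets evenly beyond `v`. -/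
def kern {K : Type*} [Field K] (b : K) (v w : List Bool) : K :=
  if v.take w.length = w then b⁻¹ ^ (v.length - w.length)
  else if w.take v.length = v then (b / 2) ^ (w.length - v.length) else 0

theorem kern_below {K : Type*} [Field K] (b : K) (w r : List Bool) :
    kern b (w ++ r) w = b⁻¹ ^ r.length := by
  simp [kern]

theorem kern_above {K : Type*} [Field K] (b : K) (v u : List Bool) :
    kern b v (v ++ u) = (b / 2) ^ u.length := by
  rcases u with _ | ⟨c, u⟩
  · simp [kern]
  · have : v.take (v ++ c :: u).length ≠ v ++ c :: u := by
      intro h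
      have := congrArg List.length h
      simp at this
    rw [kern, if_neg this, if_pos (by simp)]
    simp

theorem kern_of_not {K : Type*} [Field K] (b : K) {v w : List Bool} (h1 : ¬ v <+: w)
    (h2 : ¬ w <+: v) : kern b v w = 0 := by
  rw [kern, if_neg, if_neg]
  · intro h; exact h1 (h ▸ List.take_prefix _ _)
  · intro h; exact h2 (h ▸ List.take_prefix _ _)

theorem kern_gale {K : Type*} [Field K] [CharZero K] {b : K} (hb : b ≠ 0) (v w : List Bool) :
    b * kern b v w = kern b v (w ++ [false]) + kern b v (w ++ [true]) := by
  by_cases h1 : v <+: w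
  · obtain ⟨u, rfl⟩ := h1
    rw [List.append_assoc, List.append_assoc, kern_above, kern_above, kern_above]
    simp only [List.length_append, List.length_singleton]
    have : (2 : K) ≠ 0 := two_ne_zero
    field_simp
    ring
  by_cases h2 : w <+: v
  · obtain ⟨r, rfl⟩ := h2
    rcases r with _ | ⟨c, r⟩
    · simp at h1
    have hz : ∀ c', c' ≠ c → kern b (w ++ c :: r) (w ++ [c']) = 0 := by
      intro c' hc
      apply kern_of_not
      · rintro ⟨x, hx⟩
        simp at hx
        exact hc hx.1.symm
      · rintro ⟨x, hx⟩
        simp at hx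
        exact hc hx.1
    have hp : kern b (w ++ c :: r) (w ++ [c]) = b⁻¹ ^ r.length := by
      rw [← kern_below b (w ++ [c]) r]; simp
    have hw : b * kern b (w ++ c :: r) w = b⁻¹ ^ r.length := by
      rw [kern_below, List.length_cons, pow_succ]
      field_simp
    rw [hw]
    cases c
    · rw [hp, hz true (by simp), add_zero]
    · rw [hp, hz false (by simp), zero_add]
  · have h3 : ∀ c, kern b v (w ++ [c]) = 0 := by
      intro c
      apply kern_of_not
      · intro h
        rcases List.prefix_concat_iff.1 h with h | h
        · exact h2 (h ▸ List.prefix_append _ _)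
        · exact h1 h
      · intro h
        exact h2 ((List.prefix_append _ _).trans h)
    rw [kern_of_not b h1 h2, h3, h3]
    ring

theorem kern_nonneg {K : Type*} [Field K] [LinearOrder K] [IsStrictOrderedRing K] {b : K}
    (hb : 0 ≤ b) (v w : List Bool) : 0 ≤ kern b v w := by
  rw [kern]
  split_ifs <;> positivity

theorem kern_le {b : ℝ} (hb : 0 < b) (v w : List Bool) :
    kern b v w ≤ b ^ w.length * b⁻¹ ^ v.length := by
  by_cases h1 : v <+: w
  · obtain ⟨u, rfl⟩ := h1
    rw [kern_above, List.length_append, pow_add, mul_right_comm, ← mul_pow,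
      mul_inv_cancel₀ hb.ne', one_pow, one_mul]
    gcongr
    linarith
  by_cases h2 : w <+: v
  · obtain ⟨u, rfl⟩ := h2
    rw [kern_below, List.length_append, pow_add, ← mul_assoc, ← mul_pow,
      mul_inv_cancel₀ hb.ne', one_pow, one_mul]
  · rw [kern_of_not b h1 h2]
    positivity

theorem disjoint_cylinder {v w : List Bool} (hl : v.length = w.length) (h : v ≠ w) :
    Disjoint (cylinder v) (cylinder w) := by
  rw [Set.disjoint_left]
  intro X h1 h2
  have hv : pref X v.length = v := h1
  have hw : pref X w.length = w := h2
  rw [hl, hw] at hv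
  exact h hv.symm

/-- The measure condition bounds the number of strings of length `n` with path average
above `r`. -/
theorem card_le_of_measureCondition (μ : Measure (ℕ → Bool))
    (hμ : ∀ w : List Bool, μ (cylinder w) = (2 ^ w.length)⁻¹) {l : List Bool → Bool}
    (hl : MeasureCondition μ l) (r : ℝ) (n : ℕ) (F : Finset (List Bool))
    (hF : ∀ v ∈ F, v.length = n ∧ r < pathAvg l v) :
    (F.card : ℝ) ≤ ((2 : ℝ) ^ (1 - r)) ^ n := by
  set k := ⌈r * n⌉₊ with hk
  have hsub : (⋃ v ∈ F, cylinder v) ⊆ {Y | (k : ℕ∞) ≤ {m : ℕ | l (pref Y m) = true}.encard} := by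
    intro Y hY
    simp only [Set.mem_iUnion] at hY
    obtain ⟨v, hv, hYv⟩ := hY
    have hYv' : pref Y v.length = v := hYv
    obtain ⟨hvn, hvr⟩ := hF v hv
    have hcount : k ≤ {i ∈ Finset.range (n + 1) | l (pref Y i) = true}.card := by
      rw [hk, Nat.ceil_le, Finset.card_filter]
      push_cast
      have : ∑ i ∈ Finset.range (n + 1), (if l (pref Y i) = true then (1 : ℝ) else 0) =
          ∑ i ∈ Finset.range (v.length + 1), if l (v.take i) then (1 : ℝ) else 0 := by
        rw [hvn]
        refine Finset.sum_congr rfl fun i hi => ?_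
        rw [Finset.mem_range] at hi
        rw [← hYv', pref_take Y (by omega)]
      rw [this]
      rcases Nat.eq_zero_or_pos n with h0 | h0
      · rw [h0, Nat.cast_zero, mul_zero]
        exact Finset.sum_nonneg fun i _ => by split_ifs <;> norm_num
      · have h0' : (0 : ℝ) < v.length := by rw [hvn]; exact_mod_cast h0
        rw [pathAvg, lt_div_iff₀ h0', hvn] at hvr
        rw [hvn]
        exact hvr.le
    refine (show (k : ℕ∞) ≤ _ from Nat.cast_le (α := ℕ∞).2 hcount).trans ?_
    rw [← Set.encard_coe_eq_coe_finsetCard]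
    apply Set.encard_le_encard
    intro i hi
    simp only [Finset.coe_filter] at hi
    exact hi.2
  have hmeas : μ (⋃ v ∈ F, cylinder v) = F.card * (2 ^ n)⁻¹ := by
    rw [measure_biUnion_finset (fun v hv w hw h =>
      disjoint_cylinder ((hF v hv).1.trans (hF w hw).1.symm) h)
      (fun v _ => measurableSet_cylinder v)]
    rw [Finset.sum_congr rfl fun v hv => by rw [hμ v, (hF v hv).1]]
    simp
  have h1 : (F.card : ENNReal) * (2 ^ n)⁻¹ ≤ (2 ^ k)⁻¹ :=
    hmeas ▸ (measure_mono hsub).trans (hl k)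
  have h2 : (F.card : ℝ) * (2 ^ n)⁻¹ ≤ (2 ^ k)⁻¹ := by
    have := ENNReal.toReal_mono (by simp) h1
    simpa using this
  have h3 : (F.card : ℝ) ≤ 2 ^ n * (2 ^ k)⁻¹ := by
    rw [← div_eq_mul_inv, div_le_iff₀ (by positivity)] at h2
    linarith
  refine h3.trans ?_
  rw [← Real.rpow_natCast, ← Real.rpow_natCast, ← Real.rpow_natCast, ← Real.rpow_neg (by norm_num),
    ← Real.rpow_add (by norm_num), ← Real.rpow_mul (by norm_num)]
  apply Real.rpow_le_rpow_of_exponent_le (by norm_num)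
  have := Nat.le_ceil (r * n)
  rw [← hk] at this
  linarith

/-- The terms of the series defining the gale attached to a set `A` of strings. -/
noncomputable def galeTerm (A : Set (List Bool)) (b : ℝ) (w v : List Bool) : ℝ :=
  A.indicator (fun v => (v.length : ℝ)) v * kern b v w

/-- The weighted sum of the gales `kern b v` over `v ∈ A`, with weights `|v|`. -/
noncomputable def galeSum (A : Set (List Bool)) (b : ℝ) (w : List Bool) : ℝ :=
  ∑' v, galeTerm A b w v

theorem galeTerm_nonneg (A : Set (List Bool)) {b : ℝ} (hb : 0 ≤ b) (w v : List Bool) :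
    0 ≤ galeTerm A b w v :=
  mul_nonneg (Set.indicator_nonneg (fun _ _ => Nat.cast_nonneg _) _) (kern_nonneg hb v w)

theorem summable_galeTerm {A : Set (List Bool)} {b x : ℝ} (hx : 0 ≤ x) (hxb : x < b)
    (hA : ∀ (n : ℕ) (F : Finset (List Bool)), (∀ v ∈ F, v.length = n ∧ v ∈ A) →
      (F.card : ℝ) ≤ x ^ n) (w : List Bool) : Summable (galeTerm A b w) := by
  classical
  have hb : 0 < b := hx.trans_lt hxb
  have hρ : Summable fun n : ℕ => b ^ w.length * ((n : ℝ) ^ 1 * (x * b⁻¹) ^ n) := by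
    have hlt : ‖x * b⁻¹‖ < 1 := by
      rw [Real.norm_of_nonneg (by positivity), ← div_eq_mul_inv, div_lt_one hb]
      exact hxb
    exact (summable_pow_mul_geometric_of_norm_lt_one (R := ℝ) 1 hlt).mul_left _
  have hpos : ∀ n : ℕ, 0 ≤ b ^ w.length * ((n : ℝ) ^ 1 * (x * b⁻¹) ^ n) := fun n => by positivity
  refine summable_of_sum_le (galeTerm_nonneg A hb.le w)
    (c := ∑' n : ℕ, b ^ w.length * ((n : ℝ) ^ 1 * (x * b⁻¹) ^ n)) fun G => ?_
  rw [← Finset.sum_fiberwise_of_maps_to (s := G) (t := G.image List.length) (g := List.length)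
    (fun v hv => Finset.mem_image_of_mem _ hv)]
  refine (Finset.sum_le_sum fun n _ => ?_).trans (hρ.sum_le_tsum _ fun n _ => hpos n)
  have hle : ∀ v ∈ G.filter (fun v => v.length = n), galeTerm A b w v ≤
      if v ∈ A then b ^ w.length * (n * b⁻¹ ^ n) else 0 := by
    intro v hv
    rw [Finset.mem_filter] at hv
    rw [galeTerm]
    split_ifs with h
    · rw [Set.indicator_of_mem h]
      have := kern_le hb v w
      rw [hv.2] at this ⊢
      calc (n : ℝ) * kern b v w ≤ n * (b ^ w.length * b⁻¹ ^ n) := by gcongr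
        _ = _ := by ring
    · rw [Set.indicator_of_notMem h, zero_mul]
  refine (Finset.sum_le_sum hle).trans ?_
  rw [← Finset.sum_filter, Finset.sum_const, nsmul_eq_mul]
  have hcard := hA n ((G.filter (fun v => v.length = n)).filter (· ∈ A)) fun v hv => by
    simp only [Finset.mem_filter] at hv
    exact ⟨hv.1.2, hv.2⟩
  calc _ ≤ x ^ n * (b ^ w.length * (n * b⁻¹ ^ n)) := by gcongr
    _ = _ := by rw [mul_pow]; ring

theorem galeSum_gale {A : Set (List Bool)} {b : ℝ} (hb : 0 < b)
    (hs : ∀ w, Summable (galeTerm A b w)) (w : List Bool) :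
    b * galeSum A b w = galeSum A b (w ++ [false]) + galeSum A b (w ++ [true]) := by
  rw [galeSum, galeSum, galeSum, ← (hs _).tsum_add (hs _), ← tsum_mul_left]
  refine tsum_congr fun v => ?_
  simp only [galeTerm]
  rw [← mul_add, ← kern_gale hb.ne']
  ring

theorem length_le_galeSum {A : Set (List Bool)} {b : ℝ} (hb : 0 < b)
    (hs : ∀ w, Summable (galeTerm A b w)) {w : List Bool} (hw : w ∈ A) :
    (w.length : ℝ) ≤ galeSum A b w := by
  have h := (hs w).le_tsum w fun v _ => galeTerm_nonneg A hb.le w v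
  have h1 : galeTerm A b w w = w.length := by
    have := kern_below b w []
    simp only [List.append_nil, List.length_nil, pow_zero] at this
    rw [galeTerm, Set.indicator_of_mem hw, this, mul_one]
  rw [h1] at h
  exact h

/-- The `i`-th binary string in the standard coding (with `[]` for invalid codes). -/
def str (i : ℕ) : List Bool := (decode i : Option (List Bool)).getD []

theorem str_encode (v : List Bool) : str (encode v) = v := by simp [str]

theorem comp_str : Computable str :=
  Computable.option_getD Computable.decode (Computable.const [])

/-- The `i`-th term of the stage `t` approximation to `galeSum A b w`, where `A` is enumerated as
the set of strings `v` with `r < g (v, t)` for some `t`. -/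
def stageTerm (g : List Bool × ℕ → ℚ) (r b : ℚ) (w : List Bool) (t i : ℕ) : ℚ :=
  if encode (str i) = i then
    if r < g (str i, t) then (str i).length * kern b (str i) w else 0
  else 0

/-- The numerator of `stageTerm` for `b = p / q`. -/
def stageNum (g : List Bool × ℕ → ℚ) (r : ℚ) (p q : ℕ) (a : (List Bool × ℕ) × ℕ) : ℕ :=
  if encode (str a.2) = a.2 then
    if r < g (str a.2, a.1.2) then
      (str a.2).length *
        if (str a.2).take a.1.1.length = a.1.1 then q ^ ((str a.2).length - a.1.1.length)
        else if a.1.1.take (str a.2).length = str a.2 then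
          p ^ (a.1.1.length - (str a.2).length) else 0
    else 0
  else 0

/-- The denominator of `stageTerm` for `b = p / q`. -/
def stageDen (p q : ℕ) (a : (List Bool × ℕ) × ℕ) : ℕ :=
  if (str a.2).take a.1.1.length = a.1.1 then p ^ ((str a.2).length - a.1.1.length)
  else (2 * q) ^ (a.1.1.length - (str a.2).length)

theorem stageTerm_eq (g : List Bool × ℕ → ℚ) (r : ℚ) (p q : ℕ) (w : List Bool) (t i : ℕ) :
    stageTerm g r ((p : ℚ) / q) w t i =
      (stageNum g r p q ((w, t), i) : ℚ) / (stageDen p q ((w, t), i) : ℚ) := by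
  simp only [stageTerm, stageNum, stageDen, kern]
  split_ifs <;> simp [div_pow, mul_pow, div_div] <;> ring

theorem comp_stageDen (p q : ℕ) : Computable (stageDen p q) := by
  have hw : Computable fun a : (List Bool × ℕ) × ℕ => a.1.1 := Computable.fst.comp Computable.fst
  have hv : Computable fun a : (List Bool × ℕ) × ℕ => str a.2 := comp_str.comp Computable.snd
  have hwl : Computable fun a : (List Bool × ℕ) × ℕ => a.1.1.length :=
    Computable.list_length.comp hw
  have hvl : Computable fun a : (List Bool × ℕ) × ℕ => (str a.2).length :=
    Computable.list_length.comp hv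
  have ht1 : Computable fun a : (List Bool × ℕ) × ℕ => (str a.2).take a.1.1.length :=
    Primrec.list_take.to_comp.comp hwl hv
  exact comp_ite (comp_eq ht1 hw) (comp_pow (Computable.const p) (comp_sub hvl hwl))
    (comp_pow (Computable.const (2 * q)) (comp_sub hwl hvl))

theorem comp_stageNum {g : List Bool × ℕ → ℚ} (hg : Computable g) (h0 : ∀ a, 0 ≤ g a)
    (r : ℚ) (p q : ℕ) : Computable (stageNum g r p q) := by
  have hw : Computable fun a : (List Bool × ℕ) × ℕ => a.1.1 := Computable.fst.comp Computable.fst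
  have hv : Computable fun a : (List Bool × ℕ) × ℕ => str a.2 := comp_str.comp Computable.snd
  have hwl : Computable fun a : (List Bool × ℕ) × ℕ => a.1.1.length :=
    Computable.list_length.comp hw
  have hvl : Computable fun a : (List Bool × ℕ) × ℕ => (str a.2).length :=
    Computable.list_length.comp hv
  have ht1 : Computable fun a : (List Bool × ℕ) × ℕ => (str a.2).take a.1.1.length :=
    Primrec.list_take.to_comp.comp hwl hv
  have ht2 : Computable fun a : (List Bool × ℕ) × ℕ => a.1.1.take (str a.2).length :=
    Primrec.list_take.to_comp.comp hvl hw
  have he : Computable fun a : (List Bool × ℕ) × ℕ => decide (encode (str a.2) = a.2) :=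
    comp_eq (Computable.encode.comp hv) Computable.snd
  have hgv : Computable fun a : (List Bool × ℕ) × ℕ => g (str a.2, a.1.2) :=
    hg.comp (hv.pair (Computable.snd.comp Computable.fst))
  have hr : Computable fun a : (List Bool × ℕ) × ℕ => decide (r < g (str a.2, a.1.2)) :=
    comp_rat_lt hgv (fun a => h0 _) r
  have h1 := comp_ite (comp_eq ht2 hv) (comp_pow (Computable.const p) (comp_sub hwl hvl))
    (Computable.const 0)
  have h2 := comp_ite (comp_eq ht1 hw) (comp_pow (Computable.const q) (comp_sub hvl hwl)) h1
  exact comp_ite he (comp_ite hr (comp_mul hvl h2) (Computable.const 0)) (Computable.const 0)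

/-- The series of `galeTerm`s, reindexed by codes of strings. -/
theorem hasSum_code {f : List Bool → ℝ} (hf : Summable f) :
    HasSum (fun i => if encode (str i) = i then f (str i) else 0) (∑' v, f v) := by
  have hinj : Function.Injective (encode : List Bool → ℕ) := encode_injective
  refine (Function.Injective.hasSum_iff hinj ?_).1 ?_
  · intro i hi
    rw [if_neg]
    intro h
    exact hi ⟨_, h⟩
  · convert hf.hasSum using 1
    funext v
    simp [str_encode]

theorem lsc_galeSum {g : List Bool × ℕ → ℚ} (hg : Computable g) {f : List Bool → ℝ}
    (hgf : ∀ w t, 0 ≤ g (w, t) ∧ g (w, t) ≤ g (w, t + 1) ∧ (g (w, t) : ℝ) ≤ f w)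
    (hlim : ∀ w, Tendsto (fun t => (g (w, t) : ℝ)) atTop (nhds (f w)))
    (r b : ℚ) (hb : 0 < b) (hs : ∀ w, Summable (galeTerm {v | (r : ℝ) < f v} b w)) :
    LowerSemicomputable (galeSum {v | (r : ℝ) < f v} b) := by
  have hbR : (0 : ℝ) < b := by exact_mod_cast hb
  have hkc : ∀ v w : List Bool, ((kern b v w : ℚ) : ℝ) = kern (b : ℝ) v w := by
    intro v w
    simp only [kern]
    split_ifs <;> push_cast <;> rfl
  have hT0 : ∀ w t i, 0 ≤ stageTerm g r b w t i := by
    intro w t i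
    have := kern_nonneg hb.le (str i) w
    rw [stageTerm]
    split_ifs <;> positivity
  have hTmono : ∀ w t i, stageTerm g r b w t i ≤ stageTerm g r b w (t + 1) i := by
    intro w t i
    have h1 := (hgf (str i) t).2.1
    have h2 := kern_nonneg hb.le (str i) w
    simp only [stageTerm]
    split_ifs with _ h3 h4
    · exact le_rfl
    · exact absurd (h3.trans_le h1) h4
    · positivity
    · exact le_rfl
    · exact le_rfl
  set F : List Bool → ℕ → ℝ := fun w i => if encode (str i) = i then
    galeTerm {v | (r : ℝ) < f v} b w (str i) else 0 with hF
  have hF0 : ∀ w i, 0 ≤ F w i := by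
    intro w i
    simp only [hF]
    split_ifs
    · exact galeTerm_nonneg _ hbR.le _ _
    · exact le_rfl
  have hFsum : ∀ w, HasSum (F w) (galeSum {v | (r : ℝ) < f v} b w) := fun w => hasSum_code (hs w)
  have hTF : ∀ w t i, (stageTerm g r b w t i : ℝ) ≤ F w i := by
    intro w t i
    simp only [stageTerm, hF]
    split_ifs with h1 h2
    · have h3 : str i ∈ {v | (r : ℝ) < f v} :=
        lt_of_lt_of_le (by exact_mod_cast h2) (hgf (str i) t).2.2
      rw [galeTerm, Set.indicator_of_mem h3]
      push_cast
      rw [hkc]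
    · rw [Rat.cast_zero]
      exact galeTerm_nonneg _ hbR.le _ _
    · simp
  have hTlim : ∀ w i, ∀ᶠ t in atTop, (stageTerm g r b w t i : ℝ) = F w i := by
    intro w i
    by_cases h : str i ∈ {v | (r : ℝ) < f v}
    · filter_upwards [(hlim (str i)).eventually (lt_mem_nhds h)] with t ht
      have ht' : r < g (str i, t) := by exact_mod_cast ht
      simp only [stageTerm, hF, if_pos ht', galeTerm, Set.indicator_of_mem h]
      split_ifs
      · push_cast
        rw [hkc]
      · simp
    · refine Eventually.of_forall fun t => le_antisymm (hTF w t i) ?_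
      have : F w i = 0 := by
        simp only [hF, galeTerm, Set.indicator_of_notMem h]
        simp
      rw [this]
      exact_mod_cast hT0 w t i
  refine ⟨fun a => ∑ i ∈ Finset.range a.2, stageTerm g r b a.1 a.2 i, ?_,
    fun w t => ⟨?_, ?_, ?_⟩, ?_⟩
  · have hb' : b = (b.num.natAbs : ℚ) / (b.den : ℚ) := eq_natAbs_div hb.le
    have hp : 0 < b.num.natAbs := Int.natAbs_pos.2 (Rat.num_pos.2 hb).ne'
    refine (comp_rat_sum (comp_stageNum hg (fun a => (hgf a.1 a.2).1) r b.num.natAbs b.den)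
      (comp_stageDen b.num.natAbs b.den) (fun a => ?_) Computable.snd).of_eq fun a => ?_
    · have := b.den_pos
      rw [stageDen]
      split_ifs <;> positivity
    · refine Finset.sum_congr rfl fun i _ => ?_
      rw [← stageTerm_eq, ← hb']
  · exact Finset.sum_nonneg fun i _ => hT0 w t i
  · simp only
    rw [Finset.sum_range_succ]
    have := Finset.sum_le_sum fun i (_ : i ∈ Finset.range t) => hTmono w t i
    have := hT0 w (t + 1) t
    linarith
  · push_cast
    exact (Finset.sum_le_sum fun i _ => hTF w t i).trans
      (sum_le_hasSum _ (fun i _ => hF0 w i) (hFsum w))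
  · intro w
    have hdom := tendsto_tsum_of_dominated_convergence (𝓕 := atTop)
      (f := fun (t i : ℕ) => if i < t then (stageTerm g r b w t i : ℝ) else 0)
      (g := F w) (bound := F w) (hFsum w).summable
      (fun i => tendsto_const_nhds.congr' (by
        filter_upwards [hTlim w i, eventually_gt_atTop i] with t h1 h2
        rw [if_pos h2, h1]))
      (Eventually.of_forall fun t i => by
        have h1 : (0 : ℝ) ≤ stageTerm g r b w t i := by exact_mod_cast hT0 w t i
        split_ifs
        · rw [Real.norm_of_nonneg h1]
          exact hTF w t i
        · simpa using hF0 w i)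
    rw [(hFsum w).tsum_eq] at hdom
    refine hdom.congr fun t => ?_
    rw [tsum_eq_sum (s := Finset.range t) (fun i hi => if_neg (by simpa using hi))]
    push_cast
    exact Finset.sum_congr rfl fun i hi => if_pos (Finset.mem_range.1 hi)

/-- An algorithmic `s`-learner yields lower semicomputable gales of exponent at most `s'` for
every `s' > s`. -/
theorem gale_of_learner (μ : Measure (ℕ → Bool))
    (hμ : ∀ w : List Bool, μ (cylinder w) = (2 ^ w.length)⁻¹) (Γ : Set (ℕ → Bool))
    {s s' : ℝ} (hs : 0 ≤ s) (hss : s < s') {l : List Bool → Bool}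
    (hlsc : LowerSemicomputable (pathAvg l)) (hl : ∀ X ∈ Γ, SLearns μ l s X) :
    ∃ t, 0 ≤ t ∧ t ≤ s' ∧
      ∃ d, IsGale t d ∧ LowerSemicomputable d ∧ ∀ X ∈ Γ, SucceedsOn d X := by
  rcases Γ.eq_empty_or_nonempty with rfl | ⟨X₀, hX₀⟩
  · refine ⟨0, le_rfl, by linarith, fun _ => 0, ⟨fun _ => le_rfl, fun _ => by simp⟩,
      ⟨fun _ => 0, Computable.const 0, by simp, by simp⟩, by simp⟩
  have hmc : MeasureCondition μ l := (hl X₀ hX₀).1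
  obtain ⟨r, hr1, hr2⟩ := exists_rat_btwn (show 1 - s' < 1 - s by linarith)
  obtain ⟨b, hb1, hb2⟩ := exists_rat_btwn
    (Real.rpow_lt_rpow_of_exponent_lt (x := 2) (by norm_num) (show 1 - (r : ℝ) < s' by linarith))
  -- `r < 1 - s ≤ 1` forces `1 < b`, so the exponent `logb 2 b` is nonnegative
  have hb : (1 : ℝ) < b := lt_of_le_of_lt (Real.one_le_rpow (by norm_num) (by linarith)) hb1
  have hb0 : (0 : ℝ) < b := by linarith
  have hb0' : (0 : ℚ) < b := by exact_mod_cast hb0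
  have h2t : (2 : ℝ) ^ Real.logb 2 b = b := Real.rpow_logb (by norm_num) (by norm_num) hb0
  obtain ⟨g, hg, hgf, hlim⟩ := hlsc
  have hsum : ∀ w, Summable (galeTerm {v | (r : ℝ) < pathAvg l v} b w) :=
    summable_galeTerm (by positivity) hb1 fun n F hF =>
      card_le_of_measureCondition μ hμ hmc r n F hF
  refine ⟨Real.logb 2 b, Real.logb_nonneg (by norm_num) hb.le, ?_,
    galeSum {v | (r : ℝ) < pathAvg l v} b, ⟨fun w => ?_, fun w => ?_⟩,
    lsc_galeSum hg hgf hlim r b hb0' hsum, fun X hX M => ?_⟩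
  · rw [Real.logb_le_iff_le_rpow (by norm_num) hb0]
    exact hb2.le
  · exact tsum_nonneg fun v => galeTerm_nonneg _ hb0.le _ _
  · rw [h2t]
    exact galeSum_gale hb0 hsum w
  · have hfreq : ∃ᶠ n in atTop, (r : ℝ) < pathAvg l (pref X n) :=
      frequently_lt_of_lt_limsup (pathAvg_cobdd l X) (hr2.trans_le (hl X hX).2)
    refine (hfreq.and_eventually
      (tendsto_natCast_atTop_atTop.eventually (eventually_gt_atTop M))).mono ?_
    rintro n ⟨h1, h2⟩
    have := length_le_galeSum hb0 hsum (w := pref X n) h1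
    rw [pref_length] at this
    linarith

/-- The constant learning function `no` shows that exponent `1` always suffices. -/
theorem learner_one (μ : Measure (ℕ → Bool))
    (hμ : ∀ w : List Bool, μ (cylinder w) = (2 ^ w.length)⁻¹) (Γ : Set (ℕ → Bool)) :
    ∃ l : List Bool → Bool, LowerSemicomputable (pathAvg l) ∧ ∀ X ∈ Γ, SLearns μ l 1 X := by
  have h0 : pathAvg (fun _ => false) = fun _ => 0 := by
    funext w
    simp [pathAvg]
  refine ⟨fun _ => false, ?_, fun X _ => ⟨fun n => ?_, ?_⟩⟩
  · rw [h0]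
    exact ⟨fun _ => 0, Computable.const 0, by simp, by simp⟩
  · rcases Nat.eq_zero_or_pos n with rfl | hn
    · have h := hμ []
      have hU : cylinder [] = Set.univ := by ext; simp [_root_.cylinder, pref]
      rw [hU] at h
      exact (measure_mono (Set.subset_univ _)).trans h.le
    · have : {Y : ℕ → Bool | (n : ℕ∞) ≤ {m : ℕ | (fun _ => false) (pref Y m) = true}.encard} =
          ∅ := by
        ext Y
        simp
        omega
      rw [this]
      simp
  · rw [h0]
    simp

/-- The algorithmic dimension of `Γ` equals the infimum of all `s ∈ [0,∞)`
such that some learning function algorithmically `s`-learns every `X ∈ Γ`.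
Here `μ` is the uniform (Lebesgue) measure on Cantor space, characterized by its values
on cylinders. -/
theorem adim_eq_inf_algorithmic_s_learnable
    (μ : Measure (ℕ → Bool)) (hμ : ∀ w : List Bool, μ (cylinder w) = (2 ^ w.length)⁻¹)
    (Γ : Set (ℕ → Bool)) :
    adim Γ = sInf {s : ℝ | 0 ≤ s ∧ ∃ l : List Bool → Bool,
      LowerSemicomputable (pathAvg l) ∧ ∀ X ∈ Γ, SLearns μ l s X} := by
  have bdd : ∀ P : ℝ → Prop, BddBelow {s : ℝ | 0 ≤ s ∧ P s} := fun P => ⟨0, fun s hs => hs.1⟩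
  have hR1 : (1 : ℝ) ∈ {s : ℝ | 0 ≤ s ∧ ∃ l : List Bool → Bool,
      LowerSemicomputable (pathAvg l) ∧ ∀ X ∈ Γ, SLearns μ l s X} :=
    ⟨zero_le_one, learner_one μ hμ Γ⟩
  rw [adim]
  apply le_antisymm
  · refine le_csInf ⟨1, hR1⟩ ?_
    rintro s ⟨hs, l, hlsc, hl⟩
    refine le_of_forall_pos_le_add fun ε hε => ?_
    obtain ⟨t, ht0, hts, h⟩ := gale_of_learner μ hμ Γ hs (show s < s + ε by linarith) hlsc hl
    exact (csInf_le (bdd _) ⟨ht0, h⟩).trans hts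
  · obtain ⟨l, hlsc, hl⟩ := learner_one μ hμ Γ
    obtain ⟨t, ht0, _, h⟩ := gale_of_learner μ hμ Γ zero_le_one one_lt_two hlsc hl
    refine le_csInf ⟨t, ht0, h⟩ ?_
    rintro s ⟨hs, d, hd, hdl, hsucc⟩
    refine le_of_forall_pos_le_add fun ε hε => ?_
    exact csInf_le (bdd _) ⟨by linarith,
      learner_of_gale μ hμ Γ hs (show s < s + ε by linarith) hd hdl hsucc⟩
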